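/- Let k, j ∈ ℕ with k > 1 and j ≥ k, and let ℓ = 4^j/3^k. Then ℓ − 1/3 does not belong to 𝒪 = {4^{n−1}(2m+1)/3ⁿ : n ∈ ℕ₀, m ∈ ℤ}. Consequently, for any nonzero ℓ ∈ Λ_k with k > 1, the set Λ_1 ∪ {ℓ} does not yield a mutually orthogonal family of exponentials with respect to ν_{3/4}, since e_ℓ and e_{1/3} are not orthogonal. -/

import Mathlib

/-!
Self-similarity of `ν` makes its characteristic function `φ` satisfy
`φ t = cos t * φ (3 / 4 * t)`, so `φ t = (∏ i < n, cos ((3 / 4) ^ i * t)) * φ ((3 / 4) ^ n * t)`.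
Since `φ` is continuous and nonzero at `0`, it vanishes exactly where one of the cosines does, and
`⟨e_ℓ, e_ℓ'⟩ = φ (2 * π * (ℓ - ℓ'))` vanishes exactly when `ℓ - ℓ' ∈ 𝒪`.

An element of `𝒪` whose reduced denominator is `3 ^ k` must have `n ≥ k`, so its numerator is
divisible by `4 ^ (k - 1)`. For `ℓ - 1 / 3 = (4 ^ j - 3 ^ (k - 1)) / 3 ^ k` with `k > 1` this fails:
the numerator is odd if `j > 0`, and nonzero of absolute value below `4 ^ (k - 1)` if `j = 0`.
-/

open MeasureTheory
open scoped ENNReal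

/-- The set `𝒪 = {4^{n−1}(2m+1)/3ⁿ : n ∈ ℕ₀, m ∈ ℤ} = {(1/4)(4/3)ⁿ(2m+1) : n ∈ ℕ₀, m ∈ ℤ}`. -/
def OsetThreeFourths : Set ℝ :=
  {x : ℝ | ∃ (n : ℕ) (m : ℤ), x = (1 / 4) * (4 / 3 : ℝ) ^ n * (2 * (m : ℝ) + 1)}

section CharFun

variable {E : Type*} [MeasurableSpace E]

lemma charFun_add_measure [SeminormedAddCommGroup E] [InnerProductSpace ℝ E]
    [OpensMeasurableSpace E] (μ₁ μ₂ : Measure E) [IsFiniteMeasure μ₁] [IsFiniteMeasure μ₂] (t : E) :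
    charFun (μ₁ + μ₂) t = charFun μ₁ t + charFun μ₂ t := by
  simp only [charFun_eq_integral_innerProbChar]
  exact integral_add_measure (BoundedContinuousFunction.integrable _ _)
    (BoundedContinuousFunction.integrable _ _)

lemma charFun_smul_measure [Inner ℝ E] (c : ℝ≥0∞) (μ : Measure E) (t : E) :
    charFun (c • μ) t = c.toReal • charFun μ t :=
  integral_smul_measure _ c

lemma charFun_map_mul_add (μ : Measure ℝ) (a b t : ℝ) :
    charFun (μ.map (fun x => a * x + b)) t
      = charFun μ (a * t) * Complex.exp (b * t * Complex.I) := by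
  have hmap : μ.map (fun x => a * x + b) = (μ.map (a * ·)).map (· + b) :=
    (Measure.map_map (measurable_add_const b) (measurable_const_mul a)).symm
  rw [hmap, charFun_map_add_const, charFun_map_mul]
  simp only [RCLike.inner_apply, conj_trivial, Complex.ofReal_mul, mul_comm (b : ℂ)]

lemma integral_exp_mul_conj_exp_eq_charFun (μ : Measure ℝ) (ℓ ℓ' : ℝ) :
    ∫ x : ℝ, Complex.exp (2 * Real.pi * Complex.I * ℓ * x)
        * (starRingEnd ℂ) (Complex.exp (2 * Real.pi * Complex.I * ℓ' * x)) ∂μ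
      = charFun μ (2 * Real.pi * (ℓ - ℓ')) := by
  rw [charFun_apply_real]
  congr 1 with x
  rw [← Complex.exp_conj, ← Complex.exp_add]
  simp only [map_mul, Complex.conj_I, Complex.conj_ofReal, map_ofNat]
  push_cast
  ring_nf

end CharFun

/-- The self-similarity equation of the Bernoulli convolution `ν_a`, for the two maps
`x ↦ a x ± 1` with equal weights. No normalization of `ν` is imposed. -/
def IsBernoulliInvariant (a : ℝ) (ν : Measure ℝ) : Prop :=
  ν = (1 / 2 : ℝ≥0∞) • Measure.map (fun x : ℝ => a * x + 1) ν
    + (1 / 2 : ℝ≥0∞) • Measure.map (fun x : ℝ => a * x - 1) ν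

namespace IsBernoulliInvariant

variable {a : ℝ} {ν : Measure ℝ} [IsFiniteMeasure ν]

lemma charFun_eq_cos_mul (hν : IsBernoulliInvariant a ν) (t : ℝ) :
    charFun ν t = Real.cos t * charFun ν (a * t) := by
  have hhalf : (1 / 2 : ℝ≥0∞) ≠ ∞ := by simp
  have := Measure.smul_finite (ν.map fun x => a * x + 1) hhalf
  have := Measure.smul_finite (ν.map fun x => a * x - 1) hhalf
  calc charFun ν t
      = (1 / 2 : ℝ≥0∞).toReal • charFun (ν.map fun x => a * x + 1) t
        + (1 / 2 : ℝ≥0∞).toReal • charFun (ν.map fun x => a * x - 1) t := by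
        rw [← charFun_smul_measure, ← charFun_smul_measure, ← charFun_add_measure, ← hν]
    _ = (Complex.exp (t * Complex.I) + Complex.exp (-t * Complex.I)) / 2
        * charFun ν (a * t) := by
        simp only [sub_eq_add_neg, charFun_map_mul_add, Complex.real_smul, one_div,
          ENNReal.toReal_inv, ENNReal.toReal_ofNat]
        push_cast
        ring_nf
    _ = Real.cos t * charFun ν (a * t) := by rw [Complex.ofReal_cos, Complex.cos]

lemma charFun_eq_prod_cos_mul (hν : IsBernoulliInvariant a ν) (t : ℝ) (n : ℕ) :
    charFun ν t = (∏ i ∈ Finset.range n, Real.cos (a ^ i * t) : ℝ) * charFun ν (a ^ n * t) := by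
  induction n with
  | zero => simp
  | succ n ih =>
    rw [ih, hν.charFun_eq_cos_mul (a ^ n * t), Finset.prod_range_succ, pow_succ', mul_assoc a,
      Complex.ofReal_mul, mul_assoc]

theorem charFun_eq_zero_iff [NeZero ν] (hν : IsBernoulliInvariant a ν) (ha : |a| < 1) {t : ℝ} :
    charFun ν t = 0 ↔ ∃ n : ℕ, Real.cos (a ^ n * t) = 0 := by
  constructor
  · intro hzero
    by_contra! hcos
    have hiter (n : ℕ) : charFun ν (a ^ n * t) = 0 := by
      rw [hν.charFun_eq_prod_cos_mul t n] at hzero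
      refine (mul_eq_zero.mp hzero).resolve_left (Complex.ofReal_ne_zero.mpr ?_)
      exact Finset.prod_ne_zero_iff.mpr fun i _ => hcos i
    have hscale : Filter.Tendsto (fun n : ℕ => a ^ n * t) Filter.atTop (nhds 0) := by
      simpa using (tendsto_pow_atTop_nhds_zero_of_abs_lt_one ha).mul_const t
    have hlim : Filter.Tendsto (fun n : ℕ => charFun ν (a ^ n * t)) Filter.atTop
        (nhds (charFun ν 0)) := (continuous_charFun.tendsto 0).comp hscale
    have hcharFun_zero : charFun ν 0 = 0 :=
      tendsto_nhds_unique hlim (by simp only [hiter, tendsto_const_nhds])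
    rw [charFun_zero, Complex.ofReal_eq_zero] at hcharFun_zero
    exact measureReal_univ_ne_zero hcharFun_zero
  · rintro ⟨n, hn⟩
    rw [hν.charFun_eq_prod_cos_mul t (n + 1), Finset.prod_range_succ, hn, mul_zero,
      Complex.ofReal_zero, zero_mul]

end IsBernoulliInvariant

lemma mem_OsetThreeFourths_iff_exists_cos_eq_zero {s : ℝ} :
    s ∈ OsetThreeFourths ↔ ∃ n : ℕ, Real.cos ((3 / 4) ^ n * (2 * Real.pi * s)) = 0 := by
  simp only [OsetThreeFourths, Set.mem_ofPred_eq, Real.cos_eq_zero_iff]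
  refine exists_congr fun n => exists_congr fun m => ?_
  rw [div_pow, div_pow]
  field_simp
  constructor <;> intro h <;> linarith

theorem integral_exp_mul_conj_exp_eq_zero_iff {ν : Measure ℝ} [IsFiniteMeasure ν] [NeZero ν]
    (hν : IsBernoulliInvariant (3 / 4) ν) {ℓ ℓ' : ℝ} :
    ∫ x : ℝ, Complex.exp (2 * Real.pi * Complex.I * ℓ * x)
        * (starRingEnd ℂ) (Complex.exp (2 * Real.pi * Complex.I * ℓ' * x)) ∂ν = 0
      ↔ ℓ - ℓ' ∈ OsetThreeFourths := by
  rw [integral_exp_mul_conj_exp_eq_charFun, hν.charFun_eq_zero_iff (by norm_num [abs_lt]),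
    mem_OsetThreeFourths_iff_exists_cos_eq_zero]

/-- The factor `4` on the right avoids the truncated exponent `k - 1`. -/
lemma four_pow_dvd_of_div_three_pow_mem_OsetThreeFourths {r : ℤ} {k : ℕ} (hr : ¬ 3 ∣ r)
    (hmem : (r : ℝ) / 3 ^ k ∈ OsetThreeFourths) : 4 ^ k ∣ 4 * r := by
  obtain ⟨n, m, hnm⟩ := hmem
  have hint : 4 * r * 3 ^ n = 3 ^ k * (4 ^ n * (2 * m + 1)) := by
    rw [div_pow] at hnm
    field_simp at hnm
    have hreal : (4 * r * 3 ^ n : ℝ) = 3 ^ k * (4 ^ n * (2 * m + 1)) := by linarith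
    exact_mod_cast hreal
  have hthree : ¬ 3 ∣ 4 * r := by omega
  have hdvd : (3 : ℤ) ^ k ∣ 3 ^ n :=
    Int.prime_three.pow_dvd_of_dvd_mul_left k hthree ⟨_, hint⟩
  have hkn : k ≤ n := (pow_dvd_pow_iff three_ne_zero Int.prime_three.not_isUnit).mp hdvd
  have hcoprime : IsCoprime ((4 : ℤ) ^ k) (3 ^ n) := IsCoprime.pow (by norm_num)
  refine hcoprime.dvd_of_dvd_mul_right ?_
  rw [hint]
  exact ((pow_dvd_pow 4 hkn).mul_right _).mul_left _

lemma not_three_dvd_four_pow_sub_three_pow {k : ℕ} (hk : k ≠ 0) (j : ℕ) :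
    ¬ (3 : ℤ) ∣ 4 ^ j - 3 ^ k := by
  rw [dvd_sub_left (dvd_pow_self 3 hk)]
  intro h
  have := Int.prime_three.dvd_of_dvd_pow h
  omega

lemma not_four_pow_dvd_four_pow_sub_three_pow {k : ℕ} (hk : k ≠ 0) (j : ℕ) :
    ¬ (4 : ℤ) ^ k ∣ 4 ^ j - 3 ^ k := by
  intro hdvd
  rcases eq_or_ne j 0 with rfl | hj
  · have hone_lt : (1 : ℤ) < 3 ^ k := one_lt_pow₀ (by norm_num) hk
    have hlt : (3 : ℤ) ^ k < 4 ^ k := pow_lt_pow_left₀ (by norm_num) (by norm_num) hk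
    rw [pow_zero, dvd_sub_comm] at hdvd
    have := Int.le_of_dvd (by linarith) hdvd
    linarith
  · have hfour {i : ℕ} (hi : i ≠ 0) : Even ((4 : ℤ) ^ i) := Even.pow_of_ne_zero (by decide) hi
    have hodd : Odd ((4 : ℤ) ^ j - 3 ^ k) := (hfour hj).sub_odd (Odd.pow (by decide))
    exact Int.not_even_iff_odd.mpr hodd ((hfour hk).trans_dvd hdvd)

theorem four_pow_div_three_pow_sub_one_third_notMem_OsetThreeFourths {k : ℕ} (hk : 1 < k)
    (j : ℕ) : (4 : ℝ) ^ j / (3 : ℝ) ^ k - 1 / 3 ∉ OsetThreeFourths := by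
  obtain ⟨k, rfl⟩ : ∃ i, k = i + 1 := ⟨k - 1, by omega⟩
  have hk₀ : k ≠ 0 := by omega
  have hfrac : (4 : ℝ) ^ j / 3 ^ (k + 1) - 1 / 3 = ((4 ^ j - 3 ^ k : ℤ) : ℝ) / 3 ^ (k + 1) := by
    push_cast
    field_simp
    ring
  rw [hfrac]
  intro hmem
  have hdvd := four_pow_dvd_of_div_three_pow_mem_OsetThreeFourths
    (not_three_dvd_four_pow_sub_three_pow hk₀ j) hmem
  rw [pow_succ', mul_dvd_mul_iff_left four_ne_zero] at hdvd
  exact not_four_pow_dvd_four_pow_sub_three_pow hk₀ j hdvd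

theorem lamOne_union_element_not_orthogonal_general
    {ν : Measure ℝ} [IsFiniteMeasure ν] [NeZero ν] (hν : IsBernoulliInvariant (3 / 4) ν)
    {k : ℕ} (hk : 1 < k) (j : ℕ) :
    ((4 : ℝ) ^ j / (3 : ℝ) ^ k - 1 / 3 ∉ OsetThreeFourths) ∧
    (∫ x : ℝ, Complex.exp (2 * Real.pi * Complex.I * ((4 : ℝ) ^ j / (3 : ℝ) ^ k) * x)
        * (starRingEnd ℂ) (Complex.exp (2 * Real.pi * Complex.I * (1 / 3 : ℝ) * x)) ∂ν) ≠ 0 := by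
  have hnotMem := four_pow_div_three_pow_sub_one_third_notMem_OsetThreeFourths hk j
  refine ⟨hnotMem, ?_⟩
  have hint := (integral_exp_mul_conj_exp_eq_zero_iff hν).not.mpr hnotMem
  simpa only [Complex.ofReal_div, Complex.ofReal_pow] using hint

/-- Let `k > 1`, `j ≥ k`, and `ℓ = 4^j/3^k`.  Then `ℓ − 1/3 ∉ 𝒪`; consequently, for the
Bernoulli convolution measure `ν = ν_{3/4}`, the exponentials `e_ℓ` and `e_{1/3}` are not
orthogonal, so `Λ₁ ∪ {ℓ}` is not a mutually orthogonal family of exponentials. -/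
theorem lamOne_union_element_not_orthogonal
    (ν : Measure ℝ) [IsProbabilityMeasure ν]
    (hatom : ∀ x : ℝ, ν {x} = 0)
    (hinv : ν = (1 / 2 : ℝ≥0∞) • Measure.map (fun x : ℝ => (3 / 4 : ℝ) * x + 1) ν
              + (1 / 2 : ℝ≥0∞) • Measure.map (fun x : ℝ => (3 / 4 : ℝ) * x - 1) ν)
    (k j : ℕ) (hk : 1 < k) (hj : k ≤ j) :
    ((4 : ℝ) ^ j / (3 : ℝ) ^ k - 1 / 3 ∉ OsetThreeFourths) ∧
    (∫ x : ℝ, Complex.exp (2 * Real.pi * Complex.I * ((4 : ℝ) ^ j / (3 : ℝ) ^ k) * x)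
        * (starRingEnd ℂ) (Complex.exp (2 * Real.pi * Complex.I * (1 / 3 : ℝ) * x)) ∂ν) ≠ 0 :=
  lamOne_union_element_not_orthogonal_general hinv hk j
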